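/- The five simple graphs G₄, G₈, G₁₁, G₁₂, G₁₃ on vertex set {0,1,…,11} defined in the context are pairwise non-isomorphic (there is no graph isomorphism between any two distinct ones). -/

import Mathlib

/-!
An isomorphism of graphs conjugates one adjacency matrix into the other by a permutation, so it
preserves `tr Aᵏ`, the number of closed walks of length `k`; this depends only on the
characteristic polynomial of `A`, the invariant used in the paper. The least `k` for which `tr Aᵏ`
alone separates the five graphs is `5`: `G12` and `G13` have equally many edges and triangles,
while `tr A⁴` is the same for `G4`, `G8` and `G11`.
-/

open Polynomial SimpleGraph

/-- Edge list (each unordered edge listed once) of the graph `G4`. -/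
def edgesG4 : List (Fin 12 × Fin 12) :=
  [(0, 1), (0, 3), (0, 4), (0, 5), (0, 6), (1, 2), (1, 4), (1, 7), (1, 8), (2, 3), (2, 8), (2, 10), (2, 11), (3, 4), (3, 8), (3, 9), (4, 5), (4, 7), (4, 8), (5, 6), (5, 7), (5, 10), (5, 11), (6, 7), (6, 9), (6, 11), (7, 10), (8, 9), (8, 11), (9, 10), (9, 11), (10, 11)]

/-- The simple graph on vertex set `Fin 12` with the given edge set. -/
def G4 : SimpleGraph (Fin 12) :=
  SimpleGraph.fromRel (fun i j => (i, j) ∈ edgesG4)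

instance : DecidableRel G4.Adj := fun a b =>
  inferInstanceAs (Decidable (a ≠ b ∧ ((a, b) ∈ edgesG4 ∨ (b, a) ∈ edgesG4)))

/-- Edge list (each unordered edge listed once) of the graph `G8`. -/
def edgesG8 : List (Fin 12 × Fin 12) :=
  [(0, 1), (0, 3), (0, 4), (0, 5), (0, 6), (1, 2), (1, 4), (1, 5), (1, 7), (2, 3), (2, 4), (2, 9), (2, 10), (3, 4), (3, 9), (3, 11), (4, 5), (4, 9), (5, 6), (5, 7), (5, 8), (6, 7), (6, 8), (6, 11), (7, 8), (7, 10), (8, 9), (8, 10), (8, 11), (9, 10), (9, 11), (10, 11)]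

/-- The simple graph on vertex set `Fin 12` with the given edge set. -/
def G8 : SimpleGraph (Fin 12) :=
  SimpleGraph.fromRel (fun i j => (i, j) ∈ edgesG8)

instance : DecidableRel G8.Adj := fun a b =>
  inferInstanceAs (Decidable (a ≠ b ∧ ((a, b) ∈ edgesG8 ∨ (b, a) ∈ edgesG8)))

/-- Edge list (each unordered edge listed once) of the graph `G11`. -/
def edgesG11 : List (Fin 12 × Fin 12) :=
  [(0, 1), (0, 3), (0, 4), (0, 5), (0, 6), (1, 2), (1, 7), (1, 8), (1, 9), (2, 3), (2, 5), (2, 9), (2, 10), (3, 4), (3, 8), (3, 11), (4, 5), (4, 7), (4, 8), (4, 10), (5, 6), (5, 9), (5, 10), (6, 7), (6, 9), (6, 11), (7, 8), (7, 10), (8, 9), (8, 11), (9, 11), (10, 11)]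

/-- The simple graph on vertex set `Fin 12` with the given edge set. -/
def G11 : SimpleGraph (Fin 12) :=
  SimpleGraph.fromRel (fun i j => (i, j) ∈ edgesG11)

instance : DecidableRel G11.Adj := fun a b =>
  inferInstanceAs (Decidable (a ≠ b ∧ ((a, b) ∈ edgesG11 ∨ (b, a) ∈ edgesG11)))

/-- Edge list (each unordered edge listed once) of the graph `G12`. -/
def edgesG12 : List (Fin 12 × Fin 12) :=
  [(0, 1), (0, 3), (0, 4), (0, 5), (0, 6), (1, 2), (1, 7), (1, 8), (1, 9), (2, 3), (2, 7), (2, 9), (2, 10), (3, 4), (3, 6), (3, 11), (4, 5), (4, 8), (4, 10), (4, 11), (5, 6), (5, 9), (5, 10), (5, 11), (6, 7), (6, 11), (7, 8), (7, 10), (8, 9), (8, 10), (8, 11), (9, 10), (9, 11)]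

/-- The simple graph on vertex set `Fin 12` with the given edge set. -/
def G12 : SimpleGraph (Fin 12) :=
  SimpleGraph.fromRel (fun i j => (i, j) ∈ edgesG12)

instance : DecidableRel G12.Adj := fun a b =>
  inferInstanceAs (Decidable (a ≠ b ∧ ((a, b) ∈ edgesG12 ∨ (b, a) ∈ edgesG12)))

/-- Edge list (each unordered edge listed once) of the graph `G13`. -/
def edgesG13 : List (Fin 12 × Fin 12) :=
  [(0, 1), (0, 3), (0, 4), (0, 5), (0, 6), (1, 2), (1, 7), (1, 8), (1, 9), (2, 3), (2, 7), (2, 9), (2, 10), (3, 4), (3, 6), (3, 11), (4, 5), (4, 8), (4, 9), (4, 11), (5, 6), (5, 8), (5, 10), (5, 11), (6, 7), (6, 11), (7, 8), (7, 10), (8, 9), (8, 10), (9, 10), (9, 11), (10, 11)]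

/-- The simple graph on vertex set `Fin 12` with the given edge set. -/
def G13 : SimpleGraph (Fin 12) :=
  SimpleGraph.fromRel (fun i j => (i, j) ∈ edgesG13)

instance : DecidableRel G13.Adj := fun a b =>
  inferInstanceAs (Decidable (a ≠ b ∧ ((a, b) ∈ edgesG13 ∨ (b, a) ∈ edgesG13)))

theorem trace_reindex_self {m n R : Type*} [Fintype m] [Fintype n] [AddCommMonoid R]
    (e : m ≃ n) (A : Matrix m m R) : (Matrix.reindex e e A).trace = A.trace :=
  e.symm.sum_comp fun i => A i i

section ClosedWalks

variable {V W : Type*} [Fintype V] [DecidableEq V] [Fintype W] [DecidableEq W]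
  {G : SimpleGraph V} {H : SimpleGraph W} [DecidableRel G.Adj] [DecidableRel H.Adj]
  (R : Type*) [Semiring R] (k : ℕ)

theorem reindex_adjMatrix_pow (e : G ≃g H) :
    Matrix.reindex e.toEquiv e.toEquiv (G.adjMatrix R ^ k) = H.adjMatrix R ^ k := by
  rw [← e.reindex_adjMatrix R]
  exact map_pow (Matrix.reindexRingEquiv R e.toEquiv) (G.adjMatrix R) k

theorem trace_adjMatrix_pow_eq_of_iso (e : G ≃g H) :
    (G.adjMatrix R ^ k).trace = (H.adjMatrix R ^ k).trace := by
  rw [← reindex_adjMatrix_pow R k e, trace_reindex_self]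

theorem isEmpty_iso_of_trace_adjMatrix_pow_ne
    (h : (G.adjMatrix R ^ k).trace ≠ (H.adjMatrix R ^ k).trace) : IsEmpty (G ≃g H) :=
  ⟨fun e => h (trace_adjMatrix_pow_eq_of_iso R k e)⟩

end ClosedWalks

theorem trace_adjMatrix_pow_five_G4 : (G4.adjMatrix ℕ ^ 5).trace = 4200 := by
  decide +kernel

theorem trace_adjMatrix_pow_five_G8 : (G8.adjMatrix ℕ ^ 5).trace = 4400 := by
  decide +kernel

theorem trace_adjMatrix_pow_five_G11 : (G11.adjMatrix ℕ ^ 5).trace = 4000 := by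
  decide +kernel

theorem trace_adjMatrix_pow_five_G12 : (G12.adjMatrix ℕ ^ 5).trace = 5100 := by
  decide +kernel

theorem trace_adjMatrix_pow_five_G13 : (G13.adjMatrix ℕ ^ 5).trace = 4980 := by
  decide +kernel

/-- The graphs are pairwise non-isomorphic. -/
theorem pairwise_nonisomorphic_torus_E :
    IsEmpty (G4 ≃g G8) ∧
    IsEmpty (G4 ≃g G11) ∧
    IsEmpty (G4 ≃g G12) ∧
    IsEmpty (G4 ≃g G13) ∧
    IsEmpty (G8 ≃g G11) ∧
    IsEmpty (G8 ≃g G12) ∧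
    IsEmpty (G8 ≃g G13) ∧
    IsEmpty (G11 ≃g G12) ∧
    IsEmpty (G11 ≃g G13) ∧
    IsEmpty (G12 ≃g G13) := by
  refine ⟨?_, ?_, ?_, ?_, ?_, ?_, ?_, ?_, ?_, ?_⟩
  all_goals
    apply isEmpty_iso_of_trace_adjMatrix_pow_ne ℕ 5
    norm_num only [trace_adjMatrix_pow_five_G4, trace_adjMatrix_pow_five_G8,
      trace_adjMatrix_pow_five_G11, trace_adjMatrix_pow_five_G12, trace_adjMatrix_pow_five_G13]
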